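/- Fix degree vectors d₁,…,dₙ ∈ ℕ^d for the variables x₁,…,xₙ, so that the monomial x^u has degree deg(x^u) = Σᵢ uᵢdᵢ ∈ ℕ^d. For any function H : ℕ^d → ℕ, the set of monomial ideals I of S = k[x₁,…,xₙ] such that for every b ∈ ℕ^d the set of exponent vectors u ∈ ℕⁿ with deg(x^u) = b and x^u ∉ I is finite with exactly H(b) elements, is a finite set. In other words, there are only finitely many monomial ideals with a given Hilbert series with respect to a given ℕ^d-grading. -/

import Mathlib

/-- An ideal of `k[x₁,…,xₙ]` is a *monomial ideal* if it is generated by a set of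
monomials `x^u` with `u ∈ ℕⁿ`. -/
def IsMonomialIdeal {k : Type*} [Field k] {n : ℕ}
    (I : Ideal (MvPolynomial (Fin n) k)) : Prop :=
  ∃ U : Set (Fin n →₀ ℕ),
    I = Ideal.span ((fun u => MvPolynomial.monomial u (1 : k)) '' U)

/-! By Noetherian induction on `J`, only finitely many of the ideals with Hilbert function `H`
contain `J`; the case `J = ⊥` is the claim. If in some degree `b` more than `H b` monomials lie
outside `J`, pick `H b + 1` of them: every ideal counted contains one of these, hence one of
finitely many strictly larger ideals `J ⊔ ⟨x^u⟩`. Otherwise comparing cardinalities degree by degree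
shows that an ideal counted above `J` contains the same monomials as `J`, so that it equals `J`.
Monomials enter only as a family of vectors in a Noetherian module, degrees as a function on its
indices. -/

section SpannedBySubfamily

variable {R M α β : Type*} [Semiring R] [AddCommMonoid M] [Module R M]

/-- A submodule spanned by some of the vectors `v a`. For the family of all monomials of a
polynomial ring these are the monomial ideals. -/
def IsSpannedBySubfamily (v : α → M) (N : Submodule R M) : Prop :=
  ∃ U : Set α, N = Submodule.span R (v '' U)

/-- The indices of degree `b` whose vector lies outside `N`, as the standard monomials of degree `b`
of a monomial ideal. They are kept as indices, not vectors, since `v` need not be injective. -/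
def standardIndices (v : α → M) (deg : α → β) (N : Submodule R M) (b : β) : Set α :=
  {a | deg a = b ∧ v a ∉ N}

/-- `H` counts the standard indices of `N` in each degree. Cardinalities are taken in `ℕ∞`, so this
includes finiteness of the sets counted. -/
def HasHilbertFunction (v : α → M) (deg : α → β) (H : β → ℕ) (N : Submodule R M) : Prop :=
  ∀ b, (standardIndices v deg N b).encard = H b

variable {v : α → M} {deg : α → β} {H : β → ℕ} {J N : Submodule R M}

theorem IsSpannedBySubfamily.le (hN : IsSpannedBySubfamily v N)
    (h : ∀ a, v a ∈ N → v a ∈ J) : N ≤ J := by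
  obtain ⟨U, rfl⟩ := hN
  refine Submodule.span_le.2 ?_
  rintro _ ⟨a, ha, rfl⟩
  exact h a (Submodule.subset_span ⟨a, ha, rfl⟩)

theorem standardIndices_anti (hJN : J ≤ N) (b : β) :
    standardIndices v deg N b ⊆ standardIndices v deg J b :=
  fun _ ha => ⟨ha.1, fun haJ => ha.2 (hJN haJ)⟩

theorem IsSpannedBySubfamily.le_of_standardIndices_subset (hN : IsSpannedBySubfamily v N)
    (h : ∀ b, standardIndices v deg J b ⊆ standardIndices v deg N b) : N ≤ J :=
  hN.le fun a haN => by_contra fun haJ => (h (deg a) ⟨rfl, haJ⟩).2 haN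

theorem HasHilbertFunction.eq_of_le (hH : HasHilbertFunction v deg H N)
    (hN : IsSpannedBySubfamily v N) (hJN : J ≤ N)
    (hJ : ∀ b, (standardIndices v deg J b).encard ≤ H b) : N = J := by
  refine le_antisymm (hN.le_of_standardIndices_subset (deg := deg) fun b => ?_) hJN
  have hfin : (standardIndices v deg N b).Finite := Set.finite_of_encard_eq_coe (hH b)
  exact (hfin.eq_of_subset_of_encard_le (standardIndices_anti hJN b)
    ((hJ b).trans_eq (hH b).symm)).ge

theorem HasHilbertFunction.exists_mem (hH : HasHilbertFunction v deg H N) {b : β} {T : Set α}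
    (hT : ∀ a ∈ T, deg a = b) (hcard : H b < T.encard) : ∃ a ∈ T, v a ∈ N := by
  by_contra! hTN
  have hsub : T ⊆ standardIndices v deg N b := fun a ha => ⟨hT a ha, hTN a ha⟩
  exact hcard.not_ge ((Set.encard_le_encard hsub).trans_eq (hH b))

theorem finite_setOf_hasHilbertFunction_ge [IsNoetherian R M] (v : α → M) (deg : α → β)
    (H : β → ℕ) (J : Submodule R M) :
    {N : Submodule R M |
      IsSpannedBySubfamily v N ∧ HasHilbertFunction v deg H N ∧ J ≤ N}.Finite := by
  induction J using IsNoetherian.induction with | hgt J ih => ?_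
  by_cases hJ : ∀ b, (standardIndices v deg J b).encard ≤ H b
  · refine (Set.finite_singleton J).subset ?_
    rintro N ⟨hN, hH, hJN⟩
    exact hH.eq_of_le hN hJN hJ
  · push Not at hJ
    obtain ⟨b, hb⟩ := hJ
    obtain ⟨T, hTJ, hT⟩ : ∃ T ⊆ standardIndices v deg J b, T.encard = (H b + 1 : ℕ) :=
      Set.exists_subset_encard_eq (mod_cast Order.add_one_le_of_lt hb)
    have hTfin : T.Finite := Set.finite_of_encard_eq_coe hT
    have hcard : H b < T.encard := hT ▸ mod_cast lt_add_one (H b)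
    have hlt : ∀ a ∈ T, J < J ⊔ Submodule.span R {v a} := fun a ha =>
      left_lt_sup.2 fun hle => (hTJ ha).2 ((Submodule.span_singleton_le_iff_mem _ _).1 hle)
    refine (hTfin.biUnion fun a ha => ih _ (hlt a ha)).subset ?_
    rintro N ⟨hN, hH, hJN⟩
    obtain ⟨a, haT, haN⟩ := hH.exists_mem (fun a ha => (hTJ ha).1) hcard
    exact Set.mem_biUnion haT
      ⟨hN, hH, sup_le hJN ((Submodule.span_singleton_le_iff_mem _ _).2 haN)⟩

theorem finitely_many_monomialIdeals_with_given_hilbert_series_general [IsNoetherian R M]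
    (v : α → M) (deg : α → β) (H : β → ℕ) :
    {N : Submodule R M | IsSpannedBySubfamily v N ∧ HasHilbertFunction v deg H N}.Finite := by
  simpa only [bot_le, and_true] using finite_setOf_hasHilbertFunction_ge v deg H ⊥

end SpannedBySubfamily

/-- **Finitely many monomial ideals with a given Hilbert series.**  Fix degree
vectors `dv 1, …, dv n ∈ ℕ^d` for the variables, so `deg (x^u) = ∑ᵢ uᵢ • dv i`.
For any prescribed Hilbert function `H : ℕ^d → ℕ`, the set of monomial ideals `I`
such that for every `b ∈ ℕ^d` the set of monomials of degree `b` outside `I` is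
finite of cardinality `H b`, is finite. -/
theorem finitely_many_monomialIdeals_with_given_hilbert_series
    {k : Type*} [Field k] {n d : ℕ} (dv : Fin n → (Fin d → ℕ))
    (H : (Fin d → ℕ) → ℕ) :
    { I : Ideal (MvPolynomial (Fin n) k) | IsMonomialIdeal I ∧
      ∀ b : Fin d → ℕ,
        ({ u : Fin n →₀ ℕ | (∑ i, u i • dv i) = b ∧
            MvPolynomial.monomial u (1 : k) ∉ I }).Finite ∧
        ({ u : Fin n →₀ ℕ | (∑ i, u i • dv i) = b ∧
            MvPolynomial.monomial u (1 : k) ∉ I }).ncard = H b }.Finite :=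
  (finitely_many_monomialIdeals_with_given_hilbert_series_general
    (fun u => MvPolynomial.monomial u (1 : k)) (fun u => ∑ i, u i • dv i) H).subset
    fun _ ⟨hI, hH⟩ => ⟨hI, fun b => (hH b).1.cast_ncard_eq.symm.trans (congrArg _ (hH b).2)⟩
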